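/- If no FD-witness is reachable in the product norm_fdr(L1) ⋉ L2, then L1 ⊑fdr L2 holds (i.e., failures_⊥(L2) ⊆ failures_⊥(L1) and divergences(L2) ⊆ divergences(L1)), where a product state (U, s) is an FD-witness iff no state of U diverges and at least one of the following holds: U = ∅; s is stable and refusals(s) ⊄ refusals(U); or s diverges. -/

import Mathlib

/-- A labelled transition system with states `S` and visible actions `Act`.
Transition labels are `Option Act`, where `none` plays the role of the
internal action τ and `some a` is the visible action `a ∈ Act`. -/
structure LTS (S : Type*) (Act : Type*) where
  init : S
  tr : S → Option Act → S → Prop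

namespace LTS

variable {S S₁ S₂ : Type*} {Act : Type*}

/-- The trace relation: `s ⟶ε t` iff `s = t`, and `s ⟶(σ a) t` iff
`s ⟶σ u` and `u —a→ t` for some `u`. -/
inductive Trace (L : LTS S Act) : S → List (Option Act) → S → Prop
  | nil (s : S) : Trace L s [] s
  | snoc {s u t : S} {σ : List (Option Act)} {a : Option Act} :
      Trace L s σ u → L.tr u a t → Trace L s (σ ++ [a]) t

/-- The weak transition relation `s ⇒ρ t` for `ρ ∈ Act*`. -/
inductive Weak (L : LTS S Act) : S → List Act → S → Prop
  | refl (s : S) : Weak L s [] s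
  | tau {s t : S} : L.tr s none t → Weak L s [] t
  | act {s t : S} {a : Act} : L.tr s (some a) t → Weak L s [a] t
  | comp {s u t : S} {ρ σ : List Act} :
      Weak L s ρ u → Weak L u σ t → Weak L s (ρ ++ σ) t

/-- A state is reachable iff some trace leads from the initial state to it. -/
def Reachable (L : LTS S Act) (s : S) : Prop := ∃ σ, L.Trace L.init σ s

/-- A state is stable iff it has no outgoing τ-transition. -/
def Stable (L : LTS S Act) (s : S) : Prop := ¬ ∃ t, L.tr s none t

/-- A state diverges iff there is an infinite sequence of τ-transitions from it. -/
def Diverges (L : LTS S Act) (s : S) : Prop :=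
  ∃ f : ℕ → S, f 0 = s ∧ ∀ n, L.tr (f n) none (f (n + 1))

/-- The weak traces of an LTS. -/
def weaktraces (L : LTS S Act) : Set (List Act) := {ρ | ∃ t, L.Weak L.init ρ t}

/-- The divergences of an LTS: all `ρ σ` such that `ι ⇒ρ t` for a diverging `t`. -/
def divergences (L : LTS S Act) : Set (List Act) :=
  {w | ∃ ρ σ : List Act, w = ρ ++ σ ∧ ∃ t, L.Weak L.init ρ t ∧ L.Diverges t}

/-- The refusals of a (stable) state: all sets `X` of visible actions none of
which is enabled in `s`. -/
def refusals (L : LTS S Act) (s : S) : Set (Set Act) :=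
  {X | ∀ a ∈ X, ¬ ∃ t, L.tr s (some a) t}

/-- The refusals of a set of states. -/
def refusalsSet (L : LTS S Act) (U : Set S) : Set (Set Act) :=
  {X | ∃ s ∈ U, L.Stable s ∧ X ∈ L.refusals s}

/-- The stable failures of an LTS. -/
def failures (L : LTS S Act) : Set (List Act × Set Act) :=
  {p | ∃ t, L.Weak L.init p.1 t ∧ L.Stable t ∧ p.2 ∈ L.refusals t}

/-- The failures with post-divergence details obscured. -/
def failuresBot (L : LTS S Act) : Set (List Act × Set Act) :=
  L.failures ∪ {p | p.1 ∈ L.divergences}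

/-- The normal form of an LTS. -/
def norm (L : LTS S Act) : LTS (Set S) Act where
  init := {s | L.Weak L.init [] s}
  tr U a V := ∃ b : Act, a = some b ∧ V = {t | ∃ s ∈ U, L.Weak s [b] t}

/-- The failures-divergences normal form of an LTS. -/
def normFdr (L : LTS S Act) : LTS (Set S) Act where
  init := {s | L.Weak L.init [] s}
  tr U a V := ∃ b : Act, a = some b ∧ (¬ ∃ s ∈ U, L.Diverges s) ∧
      V = {t | ∃ s ∈ U, L.Weak s [b] t}

/-- The product of two LTSs. -/
def prod (L₁ : LTS S₁ Act) (L₂ : LTS S₂ Act) : LTS (S₁ × S₂) Act where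
  init := (L₁.init, L₂.init)
  tr p a q :=
    (a = none ∧ q.1 = p.1 ∧ L₂.tr p.2 none q.2) ∨
    (∃ b : Act, a = some b ∧ L₁.tr p.1 (some b) q.1 ∧ L₂.tr p.2 (some b) q.2)

end LTS


/-- An FD-witness: no state of `U` diverges, and `U = ∅`, or `s` is stable and
some refusal of `s` is not a refusal of `U`, or `s` diverges. -/
def FDwitness {S₁ S₂ Act : Type*} (L₁ : LTS S₁ Act) (L₂ : LTS S₂ Act)
    (p : Set S₁ × S₂) : Prop :=
  (¬ ∃ u ∈ p.1, L₁.Diverges u) ∧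
    (p.1 = ∅ ∨ (L₂.Stable p.2 ∧ ¬ L₂.refusals p.2 ⊆ L₁.refusalsSet p.1) ∨
      L₂.Diverges p.2)

/-!
In the product, `L₁.normFdr` runs in lockstep with the visible actions of `L₂`. As long as `L₁` has
not diverged along `ρ`, its normal form reaches by `ρ` the set of all states `t` with `ι ⇒ρ t`, so
every `t` with `ι₂ ⇒ρ t` yields a reachable product state whose first component carries the complete
information on the failures of `L₁` after `ρ`. A failure or divergence of `L₂` that `L₁` lacks would
make this product state an FD-witness.
-/

namespace LTS

variable {S S₁ S₂ Act : Type*} {L : LTS S Act} {L₁ : LTS S₁ Act} {L₂ : LTS S₂ Act}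

theorem trace_nil_iff {s t : S} : L.Trace s [] t ↔ s = t := by
  refine ⟨fun h => ?_, fun h => h ▸ .nil s⟩
  generalize hσ : [] = σ at h
  cases h with
  | nil => rfl
  | snoc _ _ => simp at hσ

theorem trace_concat_iff {s t : S} {σ : List (Option Act)} {a : Option Act} :
    L.Trace s (σ ++ [a]) t ↔ ∃ u, L.Trace s σ u ∧ L.tr u a t := by
  refine ⟨fun h => ?_, fun ⟨_, hsu, hut⟩ => hsu.snoc hut⟩
  generalize hσ : σ ++ [a] = σ' at h
  cases h with
  | nil => simp at hσ
  | snoc hsu hut =>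
    obtain ⟨rfl, rfl⟩ := List.append_singleton_inj.mp hσ
    exact ⟨_, hsu, hut⟩

theorem trace_singleton_iff {s t : S} {a : Option Act} : L.Trace s [a] t ↔ L.tr s a t := by
  simpa [trace_nil_iff] using trace_concat_iff (L := L) (s := s) (t := t) (σ := []) (a := a)

theorem trace_append_iff {s t : S} {σ τ : List (Option Act)} :
    L.Trace s (σ ++ τ) t ↔ ∃ u, L.Trace s σ u ∧ L.Trace u τ t := by
  induction τ using List.reverseRecOn generalizing t with
  | nil => simp [trace_nil_iff]
  | append_singleton τ a ih =>
    simp only [← List.append_assoc, trace_concat_iff, ih]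
    tauto

theorem weak_append_iff {s t : S} {ρ σ : List Act} :
    L.Weak s (ρ ++ σ) t ↔ ∃ u, L.Weak s ρ u ∧ L.Weak u σ t := by
  refine ⟨fun h => ?_, fun ⟨_, hsu, hut⟩ => hsu.comp hut⟩
  generalize hw : ρ ++ σ = w at h
  induction h generalizing ρ σ with
  | refl s =>
    obtain ⟨rfl, rfl⟩ := List.append_eq_nil_iff.mp hw
    exact ⟨s, .refl s, .refl s⟩
  | tau hst =>
    obtain ⟨rfl, rfl⟩ := List.append_eq_nil_iff.mp hw
    exact ⟨_, .refl _, .tau hst⟩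
  | act hst =>
    obtain ⟨rfl, rfl⟩ | ⟨rfl, rfl⟩ := List.append_eq_singleton_iff.mp hw
    · exact ⟨_, .refl _, .act hst⟩
    · exact ⟨_, .act hst, .refl _⟩
  | comp hsu hut ihsu ihut =>
    obtain ⟨κ, rfl, rfl⟩ | ⟨κ, rfl, rfl⟩ := List.append_eq_append_iff.mp hw
    · obtain ⟨v, hsv, hvu⟩ := ihsu rfl
      exact ⟨v, hsv, hvu.comp hut⟩
    · obtain ⟨v, huv, hvt⟩ := ihut rfl
      exact ⟨v, hsu.comp huv, hvt⟩

/-- The set of states `t` with `ι ⇒ρ t`: the states in which `L` may be after the weak trace `ρ`.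
For `ρ = []` this is by definition the initial state of `L.normFdr`. -/
def statesAfter (L : LTS S Act) (ρ : List Act) : Set S := {t | L.Weak L.init ρ t}

theorem statesAfter_append {ρ σ : List Act} :
    L.statesAfter (ρ ++ σ) = {t | ∃ s ∈ L.statesAfter ρ, L.Weak s σ t} :=
  Set.ext fun _ => weak_append_iff

theorem mk_mem_failures_iff {ρ : List Act} {X : Set Act} :
    (ρ, X) ∈ L.failures ↔ X ∈ L.refusalsSet (L.statesAfter ρ) :=
  Iff.rfl

theorem append_mem_divergences {ρ : List Act} (hρ : ρ ∈ L.divergences) (σ : List Act) :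
    ρ ++ σ ∈ L.divergences := by
  obtain ⟨ρ₁, ρ₂, rfl, t, ht, hdt⟩ := hρ
  exact ⟨ρ₁, ρ₂ ++ σ, List.append_assoc .., t, ht, hdt⟩

theorem not_exists_diverges_of_notMem_divergences {ρ : List Act} (hρ : ρ ∉ L.divergences) :
    ¬ ∃ s ∈ L.statesAfter ρ, L.Diverges s :=
  fun ⟨s, hs, hds⟩ => hρ ⟨ρ, [], (List.append_nil ρ).symm, s, hs, hds⟩

theorem normFdr_trace_statesAfter {ρ : List Act} (hρ : ρ ∉ L.divergences) :
    L.normFdr.Trace L.normFdr.init (ρ.map some) (L.statesAfter ρ) := by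
  induction ρ using List.reverseRecOn with
  | nil => exact .nil _
  | append_singleton ρ a ih =>
    have hρ' : ρ ∉ L.divergences := fun hd => hρ (append_mem_divergences hd [a])
    rw [List.map_append]
    exact (ih hρ').snoc ⟨a, rfl, not_exists_diverges_of_notMem_divergences hρ', statesAfter_append⟩

theorem exists_prod_trace_of_trace_of_weak {s₁ t₁ : S₁} {s₂ t₂ : S₂} {ρ : List Act}
    (h₁ : L₁.Trace s₁ (ρ.map some) t₁) (h₂ : L₂.Weak s₂ ρ t₂) :
    ∃ σ, (L₁.prod L₂).Trace (s₁, s₂) σ (t₁, t₂) := by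
  induction h₂ generalizing s₁ t₁ with
  | refl s₂ =>
    obtain rfl := trace_nil_iff.mp h₁
    exact ⟨[], .nil _⟩
  | tau h =>
    obtain rfl := trace_nil_iff.mp h₁
    exact ⟨[none], trace_singleton_iff.mpr (.inl ⟨rfl, rfl, h⟩)⟩
  | @act _ _ a h =>
    exact ⟨[some a], trace_singleton_iff.mpr (.inr ⟨a, rfl, trace_singleton_iff.mp h₁, h⟩)⟩
  | comp _ _ ih ih' =>
    rw [List.map_append] at h₁
    obtain ⟨u₁, hsu, hut⟩ := trace_append_iff.mp h₁
    obtain ⟨σ, hσ⟩ := ih hsu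
    obtain ⟨τ, hτ⟩ := ih' hut
    exact ⟨σ ++ τ, trace_append_iff.mpr ⟨_, hσ, hτ⟩⟩

theorem reachable_normFdr_prod {ρ : List Act} {t : S₂} (hρ : ρ ∉ L₁.divergences)
    (ht : t ∈ L₂.statesAfter ρ) : (L₁.normFdr.prod L₂).Reachable (L₁.statesAfter ρ, t) :=
  exists_prod_trace_of_trace_of_weak (normFdr_trace_statesAfter hρ) ht

end LTS

/-- if no FD-witness is reachable in the product then
failures-divergences refinement holds. -/
theorem no_witness_failures_divergences_refinement {S₁ S₂ Act : Type*}
    (L₁ : LTS S₁ Act) (L₂ : LTS S₂ Act)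
    (h : ¬ ∃ p : Set S₁ × S₂, ((L₁.normFdr).prod L₂).Reachable p ∧ FDwitness L₁ L₂ p) :
    L₂.failuresBot ⊆ L₁.failuresBot ∧ L₂.divergences ⊆ L₁.divergences := by
  have no_mismatch {ρ : List Act} {t : S₂} (hρ : ρ ∉ L₁.divergences) (ht : t ∈ L₂.statesAfter ρ) :
      ¬ ((L₂.Stable t ∧ ¬ L₂.refusals t ⊆ L₁.refusalsSet (L₁.statesAfter ρ)) ∨ L₂.Diverges t) :=
    fun hw => h ⟨_, LTS.reachable_normFdr_prod hρ ht,
      LTS.not_exists_diverges_of_notMem_divergences hρ, .inr hw⟩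
  have divergences_subset : L₂.divergences ⊆ L₁.divergences := by
    rintro _ ⟨ρ, σ, rfl, t, ht, hdt⟩
    have hρ : ρ ∈ L₁.divergences := by_contra fun hρ => no_mismatch hρ ht (.inr hdt)
    exact LTS.append_mem_divergences hρ σ
  refine ⟨?_, divergences_subset⟩
  rintro ⟨ρ, X⟩ (⟨t, ht, hstable, hX⟩ | hρ)
  · by_cases hρ : ρ ∈ L₁.divergences
    · exact .inr hρ
    · have refusals_subset : L₂.refusals t ⊆ L₁.refusalsSet (L₁.statesAfter ρ) :=
        not_not.mp fun hsub => no_mismatch hρ ht (.inl ⟨hstable, hsub⟩)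
      exact .inl (LTS.mk_mem_failures_iff.mpr (refusals_subset hX))
  · exact .inr (divergences_subset hρ)
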